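/- The subgroup of the group of bijections of ℝ⁵ generated by the two maps s and t is isomorphic to the alternating group A₅; in particular it has exactly 60 elements. -/

import Mathlib

noncomputable section

/-- Quintuplets `(z₁, z₂, z₃, z₄, z₀)` of real numbers. -/
abbrev R5 : Type := ℝ × ℝ × ℝ × ℝ × ℝ

/-- The bijection `s(z₁,z₂,z₃,z₄,z₀) = (z₀,z₄,z₃,z₂,z₁)`. -/
def sPerm : Equiv.Perm R5 where
  toFun z := (z.2.2.2.2, z.2.2.2.1, z.2.2.1, z.2.1, z.1)
  invFun z := (z.2.2.2.2, z.2.2.2.1, z.2.2.1, z.2.1, z.1)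
  left_inv z := rfl
  right_inv z := rfl

/-- The bijection `t(z₁,z₂,z₃,z₄,z₀) = (z₂,−z₃−1,−z₁−1,z₄,z₀)`. -/
def tPerm : Equiv.Perm R5 where
  toFun z := (z.2.1, -z.2.2.1 - 1, -z.1 - 1, z.2.2.2.1, z.2.2.2.2)
  invFun z := (-z.2.2.1 - 1, z.1, -z.2.1 - 1, z.2.2.2.1, z.2.2.2.2)
  left_inv z := by
    obtain ⟨a, b, c, d, e⟩ := z
    simp only [Prod.mk.injEq, and_true, true_and]
    constructor <;> ring
  right_inv z := by
    obtain ⟨a, b, c, d, e⟩ := z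
    simp only [Prod.mk.injEq, and_true, true_and]
    constructor <;> ring

/-!
Shift each coordinate by `1/2`, so that the common fixed point `(-1/2, …, -1/2)` of `s` and `t`
becomes the origin, and change the sign of the third one. In these coordinates `s` and `t`
merely permute the entries: `s` acts as a product of two disjoint transpositions and `t` as a
3-cycle, while `s * t` acts as a 5-cycle. Since `5` is prime, a transitive group of permutations of
five points is primitive, and by Jordan's theorem a primitive group containing a 3-cycle contains
the alternating group.
-/

section PermutationGroups

variable {α : Type*}

theorem isPretransitive_of_forall_sameCycle {H : Subgroup (Equiv.Perm α)} {σ : Equiv.Perm α}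
    (hσ : ∀ x y, σ.SameCycle x y) (hσH : σ ∈ H) : MulAction.IsPretransitive H α where
  exists_smul_eq x y := by
    obtain ⟨n, hn⟩ := hσ x y
    exact ⟨⟨σ ^ n, zpow_mem hσH n⟩, hn⟩

variable [Fintype α] [DecidableEq α]

theorem alternatingGroup_le_of_forall_sameCycle_of_isThreeCycle {H : Subgroup (Equiv.Perm α)}
    {σ τ : Equiv.Perm α} (hα : (Nat.card α).Prime) (hσ : ∀ x y, σ.SameCycle x y) (hσH : σ ∈ H)
    (hτ : τ.IsThreeCycle) (hτH : τ ∈ H) : alternatingGroup α ≤ H := by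
  have := isPretransitive_of_forall_sameCycle hσ hσH
  exact Equiv.Perm.alternatingGroup_le_of_isPreprimitive_of_isThreeCycle_mem
    (MulAction.IsPreprimitive.of_prime_card hα) hτ hτH

theorem closure_pair_eq_alternatingGroup {σ τ : Equiv.Perm α} (hα : (Nat.card α).Prime)
    (hσ : σ ∈ alternatingGroup α) (hτ : τ.IsThreeCycle) (hστ : ∀ x y, (σ * τ).SameCycle x y) :
    Subgroup.closure {σ, τ} = alternatingGroup α := by
  have hσ_mem : σ ∈ Subgroup.closure {σ, τ} := Subgroup.mem_closure_of_mem (by simp)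
  have hτ_mem : τ ∈ Subgroup.closure {σ, τ} := Subgroup.mem_closure_of_mem (by simp)
  apply le_antisymm
  · rw [Subgroup.closure_le, Set.pair_subset_iff]
    exact ⟨hσ, hτ.mem_alternatingGroup⟩
  · exact alternatingGroup_le_of_forall_sameCycle_of_isThreeCycle hα hστ
      (mul_mem hσ_mem hτ_mem) hτ hτ_mem

end PermutationGroups

section PermuteCoords

attribute [local instance] arrowAction

theorem faithfulSMul_arrow (G ι X : Type*) [Group G] [MulAction G ι] [FaithfulSMul G ι]
    [Nontrivial X] : FaithfulSMul G (ι → X) where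
  eq_of_smul_eq_smul {g h} hgh := by
    have hmk : DomMulAct.mk g⁻¹ = DomMulAct.mk h⁻¹ :=
      eq_of_smul_eq_smul (α := ι → X) hgh
    exact inv_injective (DomMulAct.mk.injective hmk)

variable {ι X Y : Type*}

/-- The action of the permutations of `ι` on a space `Y` with coordinates `e : Y ≃ (ι → X)`, where
`σ` moves the `i`-th coordinate to position `σ i`. -/
def permuteCoords (e : Y ≃ (ι → X)) : Equiv.Perm ι →* Equiv.Perm Y :=
  e.symm.permCongrHom.toMonoidHom.comp (MulAction.toPermHom (Equiv.Perm ι) (ι → X))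

theorem permuteCoords_apply (e : Y ≃ (ι → X)) (σ : Equiv.Perm ι) (y : Y) :
    permuteCoords e σ y = e.symm fun i => e y (σ⁻¹ i) :=
  rfl

theorem permuteCoords_injective [Nontrivial X] (e : Y ≃ (ι → X)) :
    Function.Injective (permuteCoords e) := by
  have := faithfulSMul_arrow (Equiv.Perm ι) ι X
  exact e.symm.permCongrHom.injective.comp MulAction.toPerm_injective

end PermuteCoords

/-- Coordinates on `R5` in which `sPerm` and `tPerm` are permutations of the entries. They are
centered at the common fixed point `(-1/2, …, -1/2)`, with the sign of the third entry reversed;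
`z₁, z₂, z₃, z₄, z₀` have indices `0, 1, 2, 3, 4`. -/
def centeredCoords : R5 ≃ (Fin 5 → ℝ) where
  toFun z := ![z.1 + 1 / 2, z.2.1 + 1 / 2, -(z.2.2.1 + 1 / 2), z.2.2.2.1 + 1 / 2, z.2.2.2.2 + 1 / 2]
  invFun w := (w 0 - 1 / 2, w 1 - 1 / 2, -w 2 - 1 / 2, w 3 - 1 / 2, w 4 - 1 / 2)
  left_inv z := by simp
  right_inv w := by
    ext i
    fin_cases i <;> simp

/-- The permutation of the centered coordinates induced by `sPerm`. -/
def sIndexPerm : Equiv.Perm (Fin 5) := Equiv.swap 0 4 * Equiv.swap 1 3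

/-- The permutation of the centered coordinates induced by `tPerm`. -/
def tIndexPerm : Equiv.Perm (Fin 5) := Equiv.swap 0 1 * Equiv.swap 0 2

theorem permuteCoords_sIndexPerm : permuteCoords centeredCoords sIndexPerm = sPerm := by
  ext1 z
  have hs : ⇑sIndexPerm⁻¹ = ![4, 3, 2, 1, 0] := by decide
  simp [permuteCoords_apply, hs, centeredCoords, sPerm]

theorem permuteCoords_tIndexPerm : permuteCoords centeredCoords tIndexPerm = tPerm := by
  ext1 z
  have ht : ⇑tIndexPerm⁻¹ = ![1, 2, 0, 3, 4] := by decide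
  simp only [permuteCoords_apply, ht, centeredCoords, tPerm]
  ext <;> simp <;> ring

theorem closure_indexPerms_eq_alternatingGroup :
    Subgroup.closure {sIndexPerm, tIndexPerm} = alternatingGroup (Fin 5) := by
  have hs : sIndexPerm ∈ alternatingGroup (Fin 5) :=
    Equiv.Perm.mem_alternatingGroup.mpr (by decide)
  have ht : tIndexPerm.IsThreeCycle :=
    Equiv.Perm.isThreeCycle_swap_mul_swap_same (by decide) (by decide) (by decide)
  have hst : ∀ i j, (sIndexPerm * tIndexPerm).SameCycle i j := by decide
  exact closure_pair_eq_alternatingGroup (by simp [Nat.prime_five]) hs ht hst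

theorem closure_sPerm_tPerm_eq_map_alternatingGroup :
    Subgroup.closure {sPerm, tPerm} =
      (alternatingGroup (Fin 5)).map (permuteCoords centeredCoords) := by
  rw [← closure_indexPerms_eq_alternatingGroup, MonoidHom.map_closure, Set.image_pair,
    permuteCoords_sIndexPerm, permuteCoords_tIndexPerm]

theorem card_alternatingGroup_fin_five : Nat.card (alternatingGroup (Fin 5)) = 60 := by
  rw [nat_card_alternatingGroup, Nat.card_fin]
  rfl

theorem stmt2 :
    Nonempty ((Subgroup.closure {sPerm, tPerm} : Subgroup (Equiv.Perm R5)) ≃*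
      alternatingGroup (Fin 5)) ∧
    Nat.card (Subgroup.closure {sPerm, tPerm} : Subgroup (Equiv.Perm R5)) = 60 := by
  have hinj := permuteCoords_injective centeredCoords
  rw [closure_sPerm_tPerm_eq_map_alternatingGroup]
  exact ⟨⟨((alternatingGroup (Fin 5)).equivMapOfInjective _ hinj).symm⟩,
    (Subgroup.card_map_of_injective hinj).trans card_alternatingGroup_fin_five⟩
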